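/- Let H be a Hopf algebra over k of odd dimension. Then the order of the distinguished group-like element g of H, the order of the distinguished group-like element α of H*, and the order of S⁴ are all odd; consequently, the index of H is odd. -/

import Mathlib

open scoped TensorProduct

/-- A group-like element of a coalgebra: a nonzero element `a` with `Δ a = a ⊗ a`. -/
def IsGroupLike (k : Type*) {H : Type*} [CommSemiring k] [AddCommMonoid H] [Module k H]
    [Coalgebra k H] (a : H) : Prop :=
  a ≠ 0 ∧ Coalgebra.comul (R := k) a = a ⊗ₜ[k] a

/-- The convolution product on the dual of a coalgebra. -/
noncomputable def conv {k H : Type*} [CommSemiring k] [AddCommMonoid H] [Module k H]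
    [Coalgebra k H] (f g : Module.Dual k H) : Module.Dual k H :=
  LinearMap.mul' k k ∘ₗ TensorProduct.map f g ∘ₗ Coalgebra.comul

/-- `l ∈ H*` is a right integral of `H*`: `l * β = β(1) • l` for the convolution product. -/
def IsRightIntegralDual (k : Type*) {H : Type*} [CommSemiring k] [Semiring H]
    [HopfAlgebra k H] (l : Module.Dual k H) : Prop :=
  ∀ f : Module.Dual k H, conv l f = f 1 • l

/-- `Λ ∈ H` is a left integral of `H`: `a * Λ = ε(a) • Λ` for all `a`. -/
def IsLeftIntegral (k : Type*) {H : Type*} [CommSemiring k] [Semiring H]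
    [HopfAlgebra k H] (L : H) : Prop :=
  ∀ a : H, a * L = Coalgebra.counit (R := k) a • L

/-- `Λ ∈ H` is a right integral of `H`: `Λ * a = ε(a) • Λ` for all `a`. -/
def IsRightIntegral (k : Type*) {H : Type*} [CommSemiring k] [Semiring H]
    [HopfAlgebra k H] (L : H) : Prop :=
  ∀ a : H, L * a = Coalgebra.counit (R := k) a • L

/-- `g` is the distinguished group-like element of `H`: it is group-like and
`β * λ = β(g) • λ` for some nonzero right integral `λ` of `H*`. -/
def IsDistinguishedGroupLike (k : Type*) {H : Type*} [CommSemiring k] [Semiring H]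
    [HopfAlgebra k H] (g : H) : Prop :=
  IsGroupLike k g ∧ ∃ l : Module.Dual k H, l ≠ 0 ∧ IsRightIntegralDual k l ∧
    ∀ f : Module.Dual k H, conv f l = f g • l

/-- `α` is the distinguished group-like element of `H*`: an algebra map `H → k` with
`Λ * a = α(a) • Λ` for some nonzero left integral `Λ` of `H`. -/
def IsDistinguishedGroupLikeDual (k : Type*) {H : Type*} [CommSemiring k] [Semiring H]
    [HopfAlgebra k H] (α : H →ₐ[k] k) : Prop :=
  ∃ L : H, L ≠ 0 ∧ IsLeftIntegral k L ∧ ∀ a : H, L * a = α a • L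

/-- `IsHopfIndex k g n` : `n` is the index of the Hopf algebra `H` with distinguished
group-like element `g`, i.e. the smallest positive integer `n` with `S ^ (4 n) = id` and
`g ^ n = 1`, where `S` is the antipode. -/
def IsHopfIndex (k : Type*) {H : Type*} [CommSemiring k] [Semiring H] [HopfAlgebra k H]
    (g : H) (n : ℕ) : Prop :=
  0 < n ∧ (HopfAlgebra.antipode (R := k) (A := H) : Module.End k H) ^ (4 * n) = 1 ∧ g ^ n = 1 ∧
    ∀ m : ℕ, 0 < m → (HopfAlgebra.antipode (R := k) (A := H) : Module.End k H) ^ (4 * m) = 1 →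
      g ^ m = 1 → n ≤ m

/-- The simultaneous eigenspace `H^ω_{a,i,j} = {u ∈ H | S² u = (-1)^a ω^i • u, u * g = ω^j • u}`
for `(a,i,j) ∈ ℤ/2 × ℤ/n × ℤ/n`. -/
noncomputable def hopfEigenspace {k H : Type*} [CommRing k] [Ring H] [HopfAlgebra k H]
    (g : H) (ω : k) {n : ℕ} (t : ZMod 2 × ZMod n × ZMod n) : Submodule k H :=
  Module.End.eigenspace ((HopfAlgebra.antipode (R := k) (A := H) : Module.End k H) ^ 2)
      ((-1 : k) ^ t.1.val * ω ^ t.2.1.val) ⊓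
    Module.End.eigenspace (LinearMap.mulRight k g : Module.End k H) (ω ^ t.2.2.val)

/-- Convolution powers of an element of the dual; the zeroth power is the counit,
the unit of the convolution algebra. -/
noncomputable def convPow {k H : Type*} [CommSemiring k] [AddCommMonoid H] [Module k H]
    [Coalgebra k H] (f : Module.Dual k H) : ℕ → Module.Dual k H
  | 0 => Coalgebra.counit
  | m + 1 => conv f (convPow f m)

/-!
Let `β(a ⊗ b) = a b₁ ⊗ b₂` be the Galois map of `H`, which is bijective because `H` has an antipode.
If `T` is right multiplication by a group-like element, `β` conjugates `1 ⊗ T` to `T ⊗ T`; if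
`T a = f(a₁) a₂` for a character `f`, it conjugates `T ⊗ T` to `T ⊗ 1`. In both cases
`tr(T)² = dim(H) tr(T)`. When `T² = 1` and `dim H` is odd, `tr T` is odd, so `tr T = dim H` and
`T = 1`. Hence neither `H` nor `H*` has a group-like element of order two.

For the antipode, let `l` and `Λ` be the integrals defining `g` and `α`. As `l` is a nondegenerate
functional, comparing two contractions of `ΔΛ` against `l` gives Radford's formula: `S⁴` is the
product of conjugation by `g`, of `a ↦ a₁ α(a₂)` and of `a ↦ α⁻¹(a₁) a₂`. These three operators
commute and have odd order.
-/

section Order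

variable {M : Type*} [Monoid M] {x y : M}

theorem odd_orderOf_of_forall_sq_eq_one (hx : IsOfFinOrder x) (h : ∀ y : M, y ^ 2 = 1 → y = 1) :
    Odd (orderOf x) := by
  by_contra hodd
  obtain ⟨m, hm⟩ := Nat.not_odd_iff_even.mp hodd
  have hpos : 0 < orderOf x := hx.orderOf_pos
  have hone : x ^ m = 1 := h _ (by rw [← pow_mul, mul_two, ← hm, pow_orderOf_eq_one])
  have hle : orderOf x ≤ m := orderOf_le_of_pow_eq_one (by lia) hone
  lia

theorem odd_orderOf_mul_of_commute (h : Commute x y) (hx : Odd (orderOf x))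
    (hy : Odd (orderOf y)) : Odd (orderOf (x * y)) :=
  (hx.mul hy).of_dvd_nat h.orderOf_mul_dvd_mul_orderOf

theorem sInf_pow_eq_one (x : M) : sInf {m : ℕ | 0 < m ∧ x ^ m = 1} = orderOf x := by
  simp only [orderOf, Function.minimalPeriod_eq_sInf_n_pos_IsPeriodicPt,
    isPeriodicPt_mul_iff_pow_eq_one]

theorem sInf_pow_mul_eq_one_and_pow_eq_one {N : Type*} [Monoid N] (x : M) (y : N) (n : ℕ) :
    sInf {m : ℕ | 0 < m ∧ x ^ (n * m) = 1 ∧ y ^ m = 1} = (orderOf (x ^ n)).lcm (orderOf y) := by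
  simpa [Prod.ext_iff, pow_mul] using! (sInf_pow_eq_one (x ^ n, y)).trans (Prod.orderOf _)

end Order

section Trace

open LinearMap Module

theorem trace_eq_of_comp_eq {R M N : Type*} [CommRing R] [AddCommGroup M] [Module R M]
    [AddCommGroup N] [Module R N] (e : M ≃ₗ[R] N) {f : End R M} {f' : End R N}
    (h : e.toLinearMap ∘ₗ f = f' ∘ₗ e.toLinearMap) : trace R M f = trace R N f' := by
  rw [← trace_conj' f e]
  congr 1
  rw [LinearEquiv.conj_apply, h]
  ext
  simp

variable {k V : Type*} [Field k] [AddCommGroup V] [Module k V] [FiniteDimensional k V]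
  {f : End k V}

theorem trace_eq_finrank_sub_of_sq_eq_one [NeZero (2 : k)] (hf : f ^ 2 = 1) :
    trace k V f = finrank k V - 2 * finrank k (range (1 - f)) := by
  set e : End k V := (2⁻¹ : k) • (1 - f) with he
  have hmul : (1 - f) * (1 - f) = (2 : k) • (1 - f) := by
    rw [mul_sub, sub_mul, sub_mul, ← sq f, hf, two_smul]
    noncomm_ring
  have hidem : IsIdempotentElem e := by
    rw [IsIdempotentElem, he, smul_mul_smul_comm, hmul, smul_smul, mul_assoc,
      inv_mul_cancel₀ two_ne_zero, mul_one]
  have hrange : range e = range (1 - f) := range_smul _ _ (inv_ne_zero two_ne_zero)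
  have hf_eq : f = 1 - (2 : k) • e := by
    rw [he, smul_inv_smul₀ two_ne_zero, sub_sub_cancel]
  rw [← hrange, ← hidem.isProj_range.trace]
  conv_lhs => rw [hf_eq]
  rw [map_sub, map_smul, trace_one, smul_eq_mul]

-- The relation forces `tr f = 0` or `tr f = dim V`, and `tr f ≡ dim V` modulo `2`.
theorem eq_one_of_sq_eq_one_of_trace_mul_trace [CharZero k] (hV : Odd (finrank k V))
    (hf : f ^ 2 = 1) (ht : trace k V f * trace k V f = finrank k V * trace k V f) : f = 1 := by
  rw [trace_eq_finrank_sub_of_sq_eq_one hf] at ht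
  have hprod : (finrank k V - 2 * finrank k (range (1 - f)) : k) *
      (2 * finrank k (range (1 - f))) = 0 := by
    linear_combination -ht
  rcases mul_eq_zero.mp hprod with h | h
  · have heven : finrank k V = 2 * finrank k (range (1 - f)) := by exact_mod_cast sub_eq_zero.mp h
    exact absurd hV (by simp [heven])
  · have hrange : range (1 - f) = ⊥ := by simpa using h
    exact (sub_eq_zero.mp (range_eq_bot.mp hrange)).symm

end Trace

section Sweedler

open Coalgebra HopfAlgebra WithConv

variable {R H A B ι : Type*} [CommSemiring R] [Semiring H] [Semiring A] [Algebra R A]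
  [Semiring B] [Algebra R B]

theorem tmul_one_mul_eq_smul (a : A) (w : A ⊗[R] B) : (a ⊗ₜ 1) * w = a • w := by
  rw [← mul_one a, ← smul_eq_mul a 1, ← TensorProduct.smul_tmul', smul_mul_assoc,
    ← Algebra.TensorProduct.one_def, one_mul, smul_eq_mul, mul_one]

theorem toConv_includeLeft_comp_mul_includeRight [Bialgebra R H] (f : H →ₗ[R] A) :
    toConv ((Algebra.TensorProduct.includeLeft : A →ₐ[R] A ⊗[R] H).toLinearMap ∘ₗ f) *
        toConv (Algebra.TensorProduct.includeRight : H →ₐ[R] A ⊗[R] H).toLinearMap =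
      toConv (f.rTensor H ∘ₗ comul) := by
  ext a
  simp [(ℛ R a).convMul_apply, ← (ℛ R a).eq, map_sum]

variable [HopfAlgebra R H]

theorem toConv_comp_antipode_mul (f : H →ₐ[R] A) :
    toConv (f.toLinearMap ∘ₗ antipode R) * toConv f.toLinearMap = 1 := by
  ext a
  simpa [(ℛ R a).convMul_apply] using
    congrArg f (sum_antipode_mul_eq_algebraMap_counit (ℛ R a))

theorem toConv_mul_comp_antipode (f : H →ₐ[R] A) :
    toConv f.toLinearMap * toConv (f.toLinearMap ∘ₗ antipode R) = 1 := by
  ext a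
  simpa [(ℛ R a).convMul_apply] using
    congrArg f (sum_mul_antipode_eq_algebraMap_counit (ℛ R a))

local notation "ι₁" => AlgHom.toLinearMap (Algebra.TensorProduct.includeLeft : H →ₐ[R] H ⊗[R] H)
local notation "ι₂" => AlgHom.toLinearMap (Algebra.TensorProduct.includeRight : H →ₐ[R] H ⊗[R] H)

theorem toConv_includeLeft_mul_includeRight : toConv ι₁ * toConv ι₂ = toConv comul := by
  simpa using toConv_includeLeft_comp_mul_includeRight (R := R) (H := H) LinearMap.id

theorem sum_antipode_smul_comul {a : H} (r : Repr R a ι) :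
    ∑ i ∈ r.index, antipode R (r.left i) • comul (R := R) (r.right i) = 1 ⊗ₜ a := by
  have h : toConv (ι₁ ∘ₗ antipode R) * toConv comul = toConv ι₂ := by
    rw [← toConv_includeLeft_mul_includeRight, ← mul_assoc, toConv_comp_antipode_mul, one_mul]
  simpa [r.convMul_apply, tmul_one_mul_eq_smul] using LinearMap.congr_fun (congrArg ofConv h) a

theorem sum_comul_mul_one_tmul_antipode {a : H} (r : Repr R a ι) :
    ∑ i ∈ r.index, comul (r.left i) * ((1 : H) ⊗ₜ[R] antipode R (r.right i)) = a ⊗ₜ 1 := by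
  have h : toConv comul * toConv (ι₂ ∘ₗ antipode R) = toConv ι₁ := by
    rw [← toConv_includeLeft_mul_includeRight, mul_assoc, toConv_mul_comp_antipode, mul_one]
  simpa [r.convMul_apply] using LinearMap.congr_fun (congrArg ofConv h) a

theorem sum_smul_rTensor_antipode_comul {a : H} (r : Repr R a ι) :
    ∑ i ∈ r.index, r.left i • (antipode R).rTensor H (comul (R := R) (r.right i)) = 1 ⊗ₜ a := by
  have h : toConv ι₁ * toConv ((antipode R).rTensor H ∘ₗ comul) = toConv ι₂ := by
    rw [← toConv_includeLeft_comp_mul_includeRight, ← mul_assoc, toConv_mul_comp_antipode, one_mul]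
  simpa [r.convMul_apply, tmul_one_mul_eq_smul] using LinearMap.congr_fun (congrArg ofConv h) a

end Sweedler

section Galois

open Coalgebra HopfAlgebra LinearMap

variable {R H M N : Type*} [CommSemiring R] [Semiring H] [AddCommMonoid M] [Module R M]
  [AddCommMonoid N] [Module R N]

/-- The left `H`-linear extension `a ⊗ m ↦ a • φ m` of an `R`-linear map `φ`. -/
noncomputable def leftExtend [Algebra R H] (φ : M →ₗ[R] H ⊗[R] N) : H ⊗[R] M →ₗ[H] H ⊗[R] N :=
  TensorProduct.AlgebraTensorModule.lift (toSpanSingleton H (M →ₗ[R] H ⊗[R] N) φ)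

theorem leftExtend_tmul [Algebra R H] (φ : M →ₗ[R] H ⊗[R] N) (a : H) (m : M) :
    leftExtend φ (a ⊗ₜ m) = a • φ m := rfl

variable [HopfAlgebra R H]

theorem leftExtend_comul_rTensor_antipode_comul (b : H) :
    leftExtend (comul (R := R)) ((antipode R).rTensor H (comul b)) = 1 ⊗ₜ b := by
  simp [← sum_antipode_smul_comul (ℛ R b), ← (ℛ R b).eq, leftExtend_tmul]

theorem leftExtend_rTensor_antipode_comp_comul_comul (b : H) :
    leftExtend ((antipode R).rTensor H ∘ₗ comul) (comul (R := R) b) = 1 ⊗ₜ b := by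
  simp [← sum_smul_rTensor_antipode_comul (ℛ R b), ← (ℛ R b).eq, leftExtend_tmul]

variable (R H) in
/-- The Galois map `a ⊗ b ↦ a b₁ ⊗ b₂`, with inverse `a ⊗ b ↦ a S(b₁) ⊗ b₂`. -/
noncomputable def galoisEquiv : H ⊗[R] H ≃ₗ[H] H ⊗[R] H :=
  LinearEquiv.ofLinearMap (leftExtend comul) (leftExtend ((antipode R).rTensor H ∘ₗ comul))
    (by ext b; simpa [leftExtend_tmul] using leftExtend_comul_rTensor_antipode_comul b)
    (by ext b; simpa [leftExtend_tmul] using leftExtend_rTensor_antipode_comp_comul_comul b)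

theorem galoisEquiv_tmul (a b : H) : galoisEquiv R H (a ⊗ₜ b) = a • comul (R := R) b := rfl

end Galois

section Contraction

open LinearMap Module

variable {R M N P : Type*} [CommSemiring R] [AddCommMonoid M] [Module R M] [AddCommMonoid N]
  [Module R N] [AddCommMonoid P] [Module R P]

/-- The contraction `m ⊗ n ↦ f m • n` of the first tensor factor against a functional `f`. -/
noncomputable def contractFst (f : Dual R M) : M ⊗[R] N →ₗ[R] N :=
  (TensorProduct.lid R N).toLinearMap ∘ₗ f.rTensor N

/-- The contraction `m ⊗ n ↦ f n • m` of the second tensor factor against a functional `f`. -/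
noncomputable def contractSnd (f : Dual R N) : M ⊗[R] N →ₗ[R] M :=
  (TensorProduct.rid R M).toLinearMap ∘ₗ f.lTensor M

@[simp]
theorem contractFst_tmul (f : Dual R M) (m : M) (n : N) :
    contractFst f (m ⊗ₜ n) = f m • n := by
  simp [contractFst]

@[simp]
theorem contractSnd_tmul (f : Dual R N) (m : M) (n : N) :
    contractSnd f (m ⊗ₜ n) = f n • m := by
  simp [contractSnd]

theorem contractFst_rTensor (f : Dual R P) (h : M →ₗ[R] P) (w : M ⊗[R] N) :
    contractFst f (h.rTensor N w) = contractFst (f ∘ₗ h) w := by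
  simp [contractFst, rTensor_comp]

theorem contractFst_lTensor (f : Dual R M) (h : N →ₗ[R] P) (w : M ⊗[R] N) :
    contractFst f (h.lTensor M w) = h (contractFst f w) := by
  induction w with
  | zero => simp
  | tmul => simp
  | add v w hv hw => simp [hv, hw]

theorem contractSnd_lTensor (f : Dual R P) (h : N →ₗ[R] P) (w : M ⊗[R] N) :
    contractSnd f (h.lTensor M w) = contractSnd (f ∘ₗ h) w := by
  simp [contractSnd, lTensor_comp]

theorem contractSnd_rTensor (f : Dual R N) (h : M →ₗ[R] P) (w : M ⊗[R] N) :
    contractSnd f (h.rTensor N w) = h (contractSnd f w) := by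
  induction w with
  | zero => simp
  | tmul => simp
  | add v w hv hw => simp [hv, hw]

theorem contractFst_assoc (f : Dual R M) (w : (M ⊗[R] N) ⊗[R] P) :
    contractFst f (TensorProduct.assoc R M N P w) = (contractFst f).rTensor P w := by
  refine LinearMap.congr_fun
    (f := contractFst f ∘ₗ (TensorProduct.assoc R M N P).toLinearMap) ?_ w
  ext
  simp [TensorProduct.smul_tmul']

theorem contractSnd_assoc_symm (f : Dual R P) (w : M ⊗[R] (N ⊗[R] P)) :
    contractSnd f ((TensorProduct.assoc R M N P).symm w) = (contractSnd f).lTensor M w := by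
  refine LinearMap.congr_fun
    (f := contractSnd f ∘ₗ (TensorProduct.assoc R M N P).symm.toLinearMap) ?_ w
  ext
  simp

variable {A B : Type*} [Semiring A] [Algebra R A] [Semiring B] [Algebra R B]

theorem contractFst_smul (f : Dual R A) (a : A) (w : A ⊗[R] N) :
    contractFst f (a • w) = contractFst (f ∘ₗ mulLeft R a) w := by
  induction w with
  | zero => simp
  | tmul => simp [TensorProduct.smul_tmul']
  | add v w hv hw => simp [hv, hw]

theorem contractSnd_smul (f : Dual R N) (a : A) (w : A ⊗[R] N) :
    contractSnd f (a • w) = a * contractSnd f w := by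
  induction w with
  | zero => simp
  | tmul => simp [TensorProduct.smul_tmul']
  | add v w hv hw => simp [hv, hw, mul_add]

theorem contractFst_one_tmul_mul (f : Dual R A) (b : B) (w : A ⊗[R] B) :
    contractFst f ((1 ⊗ₜ b) * w) = b * contractFst f w := by
  induction w with
  | zero => simp
  | tmul => simp
  | add v w hv hw => simp [hv, hw, mul_add]

theorem contractFst_mul_one_tmul (f : Dual R A) (b : B) (w : A ⊗[R] B) :
    contractFst f (w * (1 ⊗ₜ b)) = contractFst f w * b := by
  induction w with
  | zero => simp
  | tmul => simp
  | add v w hv hw => simp [hv, hw, add_mul]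

theorem contractFst_mul_tmul_one (f : Dual R A) (a : A) (w : A ⊗[R] B) :
    contractFst f (w * (a ⊗ₜ 1)) = contractFst (f ∘ₗ mulRight R a) w := by
  induction w with
  | zero => simp
  | tmul => simp
  | add v w hv hw => simp [hv, hw, add_mul]

theorem contractSnd_one_tmul_mul (f : Dual R B) (b : B) (w : A ⊗[R] B) :
    contractSnd f ((1 ⊗ₜ b) * w) = contractSnd (f ∘ₗ mulLeft R b) w := by
  induction w with
  | zero => simp
  | tmul => simp
  | add v w hv hw => simp [hv, hw, mul_add]

theorem contractSnd_mul_one_tmul (f : Dual R B) (b : B) (w : A ⊗[R] B) :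
    contractSnd f (w * (1 ⊗ₜ b)) = contractSnd (f ∘ₗ mulRight R b) w := by
  induction w with
  | zero => simp
  | tmul => simp
  | add v w hv hw => simp [hv, hw, add_mul]

theorem apply_mul'_eq_sum {ι : Type*} [Fintype ι] (e : Basis ι R A) (f : Dual R A)
    (w : A ⊗[R] A) :
    f (mul' R A w) = ∑ i, e.coord i (contractSnd (f ∘ₗ mulLeft R (e i)) w) := by
  induction w with
  | zero => simp
  | tmul x y =>
    have hx : x * y = ∑ i, e.repr x i • (e i * y) := by
      conv_lhs => rw [← e.sum_repr x, Finset.sum_mul]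
      simp
    simp [hx, mul_comm]
  | add v w hv hw => simp [hv, hw, Finset.sum_add_distrib]

end Contraction

section Hit

open Coalgebra LinearMap Module

variable {R C : Type*} [CommSemiring R] [AddCommMonoid C] [Module R C] [Coalgebra R C]

/-- The right action `a ↼ f = f(a₁) a₂` of the dual on a coalgebra. -/
noncomputable def rightHit (f : Dual R C) : End R C := contractFst f ∘ₗ comul

/-- The left action `f ⇀ a = a₁ f(a₂)` of the dual on a coalgebra. -/
noncomputable def leftHit (f : Dual R C) : End R C := contractSnd f ∘ₗ comul

theorem rightHit_apply (f : Dual R C) (a : C) : rightHit f a = contractFst f (comul a) := rfl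

theorem leftHit_apply (f : Dual R C) (a : C) : leftHit f a = contractSnd f (comul a) := rfl

theorem rightHit_eq_sum {ι : Type*} (f : Dual R C) {a : C} (r : Repr R a ι) :
    rightHit f a = ∑ i ∈ r.index, f (r.left i) • r.right i := by
  simp [rightHit_apply, ← r.eq]

theorem leftHit_eq_sum {ι : Type*} (f : Dual R C) {a : C} (r : Repr R a ι) :
    leftHit f a = ∑ i ∈ r.index, f (r.right i) • r.left i := by
  simp [leftHit_apply, ← r.eq]

theorem conv_eq_comp_rightHit (f h : Dual R C) : conv f h = h ∘ₗ rightHit f := by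
  ext a
  simp [rightHit_eq_sum f (ℛ R a), conv, ← (ℛ R a).eq]

theorem conv_eq_comp_leftHit (f h : Dual R C) : conv f h = f ∘ₗ leftHit h := by
  ext a
  simp [leftHit_eq_sum h (ℛ R a), conv, ← (ℛ R a).eq, mul_comm]

theorem rightHit_counit : rightHit (counit (R := R) (A := C)) = 1 := by
  ext a
  simp [rightHit_apply, contractFst]

theorem leftHit_counit : leftHit (counit (R := R) (A := C)) = 1 := by
  ext a
  simp [leftHit_apply, contractSnd]

theorem counit_rightHit (f : Dual R C) (a : C) : counit (R := R) (rightHit f a) = f a := by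
  rw [← comp_apply, ← conv_eq_comp_rightHit, conv_eq_comp_leftHit, leftHit_counit, comp_apply,
    End.one_apply]

theorem comul_rightHit (f : Dual R C) (a : C) :
    comul (R := R) (rightHit f a) = (rightHit f).rTensor C (comul a) := by
  rw [rightHit_apply, ← contractFst_lTensor, ← coassoc_apply, contractFst_assoc, rightHit,
    rTensor_comp, comp_apply]

theorem comul_leftHit (f : Dual R C) (a : C) :
    comul (R := R) (leftHit f a) = (leftHit f).lTensor C (comul a) := by
  rw [leftHit_apply, ← contractSnd_rTensor, ← coassoc_symm_apply, contractSnd_assoc_symm, leftHit,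
    lTensor_comp, comp_apply]

theorem commute_leftHit_rightHit (f h : Dual R C) : Commute (leftHit f) (rightHit h) := by
  ext a
  simp only [End.mul_apply]
  rw [leftHit_apply, comul_rightHit, contractSnd_rTensor, ← leftHit_apply]

theorem rightHit_conv (f h : Dual R C) : rightHit (conv f h) = rightHit h * rightHit f := by
  ext a
  rw [End.mul_apply, rightHit_apply h, comul_rightHit, contractFst_rTensor,
    ← conv_eq_comp_rightHit, ← rightHit_apply]

theorem leftHit_conv (f h : Dual R C) : leftHit (conv f h) = leftHit f * leftHit h := by
  ext a
  rw [End.mul_apply, leftHit_apply f, comul_leftHit, contractSnd_lTensor,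
    ← conv_eq_comp_leftHit, ← leftHit_apply]

theorem rightHit_convPow (f : Dual R C) (m : ℕ) : rightHit (convPow f m) = rightHit f ^ m := by
  induction m with
  | zero => exact rightHit_counit
  | succ m ih => rw [convPow, rightHit_conv, ih, pow_succ]

theorem leftHit_convPow (f : Dual R C) (m : ℕ) : leftHit (convPow f m) = leftHit f ^ m := by
  induction m with
  | zero => exact leftHit_counit
  | succ m ih => rw [convPow, leftHit_conv, ih, pow_succ']

theorem leftHit_of_isGroupLikeElem (f : Dual R C) {a : C} (ha : IsGroupLikeElem R a) :
    leftHit f a = f a • a := by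
  simp [leftHit_apply, ha]

theorem rightHit_of_isGroupLikeElem (f : Dual R C) {a : C} (ha : IsGroupLikeElem R a) :
    rightHit f a = f a • a := by
  simp [rightHit_apply, ha]

end Hit

section HitMul

variable {R H : Type*} [CommSemiring R] [Semiring H] [Bialgebra R H]

theorem rightHit_mul (f : H →ₐ[R] R) (a b : H) :
    rightHit f.toLinearMap (a * b) = rightHit f.toLinearMap a * rightHit f.toLinearMap b := by
  have h (w : H ⊗[R] H) : contractFst f.toLinearMap w =
      Algebra.TensorProduct.lid R H (Algebra.TensorProduct.map f (AlgHom.id R H) w) := rfl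
  simp only [rightHit_apply, Bialgebra.comul_mul, h, map_mul]

theorem leftHit_mul (f : H →ₐ[R] R) (a b : H) :
    leftHit f.toLinearMap (a * b) = leftHit f.toLinearMap a * leftHit f.toLinearMap b := by
  have h (w : H ⊗[R] H) : contractSnd f.toLinearMap w =
      Algebra.TensorProduct.rid R R H (Algebra.TensorProduct.map (AlgHom.id R H) f w) := rfl
  simp only [leftHit_apply, Bialgebra.comul_mul, h, map_mul]

end HitMul

section Character

open Coalgebra HopfAlgebra WithConv

variable {R H A : Type*} [CommSemiring R] [Semiring H] [CommSemiring A] [Algebra R A]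

section Bialgebra

variable [Bialgebra R H]

theorem conv_toLinearMap (f h : H →ₐ[R] R) :
    conv f.toLinearMap h.toLinearMap = (toConv f * toConv h).ofConv.toLinearMap := rfl

theorem convPow_toLinearMap (f : H →ₐ[R] R) (m : ℕ) :
    convPow f.toLinearMap m = (toConv f ^ m).ofConv.toLinearMap := by
  induction m with
  | zero => rfl
  | succ m ih =>
    rw [convPow, ih, pow_succ', conv_toLinearMap]

theorem convPow_toLinearMap_eq_counit_iff (f : H →ₐ[R] R) (m : ℕ) :
    convPow f.toLinearMap m = counit ↔ toConv f ^ m = 1 := by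
  rw [convPow_toLinearMap]
  exact (AlgHom.toLinearMap_injective.comp ofConv_injective).eq_iff (b := 1)

theorem sInf_convPow_eq_counit (f : H →ₐ[R] R) :
    sInf {m : ℕ | 0 < m ∧ convPow f.toLinearMap m = counit} = orderOf (toConv f) := by
  simp only [convPow_toLinearMap_eq_counit_iff, sInf_pow_eq_one]

theorem orderOf_rightHit_dvd (f : H →ₐ[R] R) :
    orderOf (rightHit f.toLinearMap) ∣ orderOf (toConv f) :=
  orderOf_dvd_of_pow_eq_one <| by
    rw [← rightHit_convPow, (convPow_toLinearMap_eq_counit_iff f _).mpr (pow_orderOf_eq_one _),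
      rightHit_counit]

theorem orderOf_leftHit_dvd (f : H →ₐ[R] R) :
    orderOf (leftHit f.toLinearMap) ∣ orderOf (toConv f) :=
  orderOf_dvd_of_pow_eq_one <| by
    rw [← leftHit_convPow, (convPow_toLinearMap_eq_counit_iff f _).mpr (pow_orderOf_eq_one _),
      leftHit_counit]

end Bialgebra

variable [HopfAlgebra R H]

/-- The convolution inverse `f ∘ S` of an algebra map `f` to a commutative algebra. -/
noncomputable def convInv (f : H →ₐ[R] A) : H →ₐ[R] A :=
  AlgHom.ofLinearMap (f.toLinearMap ∘ₗ antipode R) (by simp)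
    fun a b ↦ by simp [antipode_mul_antidistrib, mul_comm]

theorem toConv_convInv_mul (f : H →ₐ[R] A) : toConv (convInv f) * toConv f = 1 :=
  AlgHom.toLinearMap_injective.comp ofConv_injective <|
    congrArg ofConv (toConv_comp_antipode_mul f)

theorem toConv_mul_convInv (f : H →ₐ[R] A) : toConv f * toConv (convInv f) = 1 :=
  AlgHom.toLinearMap_injective.comp ofConv_injective <|
    congrArg ofConv (toConv_mul_comp_antipode f)

theorem rightHit_mul_rightHit_convInv (f : H →ₐ[R] R) :
    rightHit f.toLinearMap * rightHit (convInv f).toLinearMap = 1 := by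
  rw [← rightHit_conv, conv_toLinearMap, toConv_convInv_mul]
  exact rightHit_counit

theorem galoisEquiv_map_rightHit (f : H →ₐ[R] R) (w : H ⊗[R] H) :
    galoisEquiv R H (TensorProduct.map (rightHit f.toLinearMap) (rightHit f.toLinearMap) w) =
      (rightHit f.toLinearMap).rTensor H (galoisEquiv R H w) := by
  have hsmul (a : H) (v : H ⊗[R] H) : (rightHit f.toLinearMap).rTensor H (a • v) =
      rightHit f.toLinearMap a • (rightHit f.toLinearMap).rTensor H v := by
    induction v with
    | zero => simp
    | tmul => simp [TensorProduct.smul_tmul', rightHit_mul]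
    | add v w hv hw => simp [hv, hw]
  induction w with
  | zero => simp
  | tmul => simp [galoisEquiv_tmul, comul_rightHit, hsmul]
  | add v w hv hw => simp [hv, hw]

end Character

section CharacterOrder

open Coalgebra LinearMap WithConv Module

variable {k H : Type*} [Field k] [Ring H] [HopfAlgebra k H] [FiniteDimensional k H]

theorem isOfFinOrder_toConv (f : H →ₐ[k] k) : IsOfFinOrder (toConv f) := by
  have : Finite (WithConv (H →ₐ[k] k)) := .of_injective _ ofConv_injective
  let u : (WithConv (H →ₐ[k] k))ˣ := ⟨_, _, toConv_mul_convInv f, toConv_convInv_mul f⟩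
  exact u.isUnit.isOfFinOrder

variable [CharZero k]

theorem toConv_eq_one_of_sq_eq_one (hdim : Odd (finrank k H)) {f : WithConv (H →ₐ[k] k)}
    (hf : f ^ 2 = 1) : f = 1 := by
  set T : End k H := rightHit f.ofConv.toLinearMap
  have hT2 : T ^ 2 = 1 := by
    rw [← rightHit_convPow, (convPow_toLinearMap_eq_counit_iff _ _).mpr hf, rightHit_counit]
  have htrace := trace_eq_of_comp_eq ((galoisEquiv k H).restrictScalars k)
    (f := TensorProduct.map T T) (f' := TensorProduct.map T 1)
    (LinearMap.ext (galoisEquiv_map_rightHit f.ofConv))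
  rw [trace_tensorProduct', trace_tensorProduct', trace_one, mul_comm _ (finrank k H : k)] at htrace
  have hT : T = 1 := eq_one_of_sq_eq_one_of_trace_mul_trace hdim hT2 htrace
  refine ofConv_injective (AlgHom.toLinearMap_injective (LinearMap.ext fun a ↦ ?_))
  rw [← counit_rightHit]
  exact congrArg counit (DFunLike.congr_fun hT a)

theorem odd_orderOf_toConv (hdim : Odd (finrank k H)) (f : H →ₐ[k] k) :
    Odd (orderOf (toConv f)) :=
  odd_orderOf_of_forall_sq_eq_one (isOfFinOrder_toConv f) fun _ ↦ toConv_eq_one_of_sq_eq_one hdim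

theorem odd_orderOf_rightHit (hdim : Odd (finrank k H)) (f : H →ₐ[k] k) :
    Odd (orderOf (rightHit f.toLinearMap)) :=
  (odd_orderOf_toConv hdim f).of_dvd_nat (orderOf_rightHit_dvd f)

theorem odd_orderOf_leftHit (hdim : Odd (finrank k H)) (f : H →ₐ[k] k) :
    Odd (orderOf (leftHit f.toLinearMap)) :=
  (odd_orderOf_toConv hdim f).of_dvd_nat (orderOf_leftHit_dvd f)

end CharacterOrder

section GroupLike

open Coalgebra HopfAlgebra LinearMap

theorem IsGroupLike.isGroupLikeElem {k C : Type*} [Field k] [AddCommGroup C] [Module k C]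
    [Coalgebra k C] {a : C} (ha : IsGroupLike k a) : IsGroupLikeElem k a := by
  refine ⟨?_, ha.2⟩
  have h : (1 : k) ⊗ₜ[k] a = counit (R := k) a ⊗ₜ a := by
    rw [← rTensor_counit_comul, ha.2, rTensor_tmul]
  have hsmul : (1 : k) • a = counit (R := k) a • a := congrArg (TensorProduct.lid k C) h
  exact (smul_left_injective k ha.1 hsmul).symm

section Conj

variable {R H : Type*} [CommSemiring R] [Semiring H] [HopfAlgebra R H]

/-- Conjugation `a ↦ g a g⁻¹` by group-like elements; recall that `S(g) = g⁻¹`. -/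
noncomputable def conjHom : GroupLike R H →* Module.End R H where
  toFun g := mulLeft R (g : H) * mulRight R (antipode R (g : H))
  map_one' := by simp [Module.End.one_eq_id, Module.End.mul_eq_comp]
  map_mul' g h := by
    ext a
    simp [antipode_mul_antidistrib, mul_assoc]

theorem conjHom_apply (g : GroupLike R H) (a : H) :
    conjHom g a = g * a * antipode R (g : H) := by
  simp [conjHom, mul_assoc]

theorem commute_conjHom_of_map_mul {f : H →ₐ[R] R} {T : Module.End R H} (g : GroupLike R H)
    (hmul : ∀ a b, T (a * b) = T a * T b)
    (hT : ∀ a, IsGroupLikeElem R a → T a = f a • a) : Commute (conjHom g) T := by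
  have hf : f g * f (antipode R (g : H)) = 1 := by
    rw [← map_mul, g.2.mul_antipode_cancel, map_one]
  ext a
  simp [conjHom_apply, hmul, hT _ g.2, hT _ g.2.antipode, smul_smul, hf, mul_comm]

theorem galoisEquiv_map_one_mulRight (g : GroupLike R H) (w : H ⊗[R] H) :
    galoisEquiv R H (TensorProduct.map (1 : Module.End R H) (mulRight R (g : H)) w) =
      TensorProduct.map (mulRight R (g : H)) (mulRight R (g : H)) (galoisEquiv R H w) := by
  have hmul (v : H ⊗[R] H) : v * ((g : H) ⊗ₜ (g : H)) =
      TensorProduct.map (mulRight R (g : H)) (mulRight R (g : H)) v := by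
    induction v with
    | zero => simp
    | tmul => simp
    | add v w hv hw => simp [hv, hw, add_mul]
  induction w with
  | zero => simp
  | tmul => simp [galoisEquiv_tmul, g.2.comul_eq_tmul_self, ← hmul, smul_mul_assoc]
  | add v w hv hw => simp [hv, hw]

end Conj

open Module

variable {k H : Type*} [Field k] [CharZero k] [Ring H] [HopfAlgebra k H] [FiniteDimensional k H]

theorem groupLike_eq_one_of_sq_eq_one (hdim : Odd (finrank k H)) {g : GroupLike k H}
    (hg : g ^ 2 = 1) : g = 1 := by
  set T : End k H := mulRight k (g : H)
  have hT2 : T ^ 2 = 1 := by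
    rw [pow_mulRight, ← GroupLike.val_pow, hg, GroupLike.val_one, mulRight_one]
    rfl
  have htrace := trace_eq_of_comp_eq ((galoisEquiv k H).restrictScalars k)
    (f := TensorProduct.map 1 T) (f' := TensorProduct.map T T)
    (LinearMap.ext (galoisEquiv_map_one_mulRight g))
  rw [trace_tensorProduct', trace_tensorProduct', trace_one] at htrace
  have hT : T = 1 := eq_one_of_sq_eq_one_of_trace_mul_trace hdim hT2 htrace.symm
  exact GroupLike.val_injective (by simpa [T] using DFunLike.congr_fun hT 1)

theorem odd_orderOf_groupLike (hdim : Odd (finrank k H)) (g : GroupLike k H) :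
    Odd (orderOf g) := by
  have : Finite (GroupLike k H) := (linearIndep_groupLikeVal (R := k) (A := H)).finite
  exact odd_orderOf_of_forall_sq_eq_one (isOfFinOrder_of_finite g)
    fun _ ↦ groupLike_eq_one_of_sq_eq_one hdim

end GroupLike

section DualIntegral

open Coalgebra HopfAlgebra LinearMap Module

section Projective

variable {R C : Type*} [CommSemiring R] [AddCommMonoid C] [Module R C] [Coalgebra R C]
  [Projective R C] {l : Dual R C} {g : C}

theorem leftHit_apply_of_forall_conv_eq (hl : ∀ f, conv f l = f g • l) (a : C) :
    leftHit l a = l a • g := by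
  refine eval_apply_injective R (LinearMap.ext fun f ↦ ?_)
  rw [Dual.eval_apply, Dual.eval_apply, ← comp_apply, ← conv_eq_comp_leftHit, hl]
  simp [mul_comm]

theorem rightHit_apply_of_forall_conv_eq (hl : ∀ f, conv l f = f g • l) (a : C) :
    rightHit l a = l a • g := by
  refine eval_apply_injective R (LinearMap.ext fun f ↦ ?_)
  rw [Dual.eval_apply, Dual.eval_apply, ← comp_apply, ← conv_eq_comp_rightHit, hl]
  simp [mul_comm]

end Projective

theorem contractSnd_one_tmul_mul_comul {R H ι : Type*} [CommSemiring R] [Semiring H]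
    [HopfAlgebra R H] (l : Dual R H) {a : H} (r : Repr R a ι) (b : H) :
    contractSnd l ((1 ⊗ₜ a) * comul b) =
      ∑ i ∈ r.index, antipode R (r.left i) * leftHit l (r.right i * b) := by
  rw [← sum_antipode_smul_comul r, Finset.sum_mul]
  simp only [smul_mul_assoc, ← Bialgebra.comul_mul, map_sum, contractSnd_smul, leftHit_apply]

variable {k H : Type*} [Field k] [Ring H] [HopfAlgebra k H] {l : Dual k H} {g b : H}

theorem contractSnd_comp_mulLeft_comul_eq_zero (hl : ∀ f, conv f l = f g • l)
    (hb : ∀ a, l (a * b) = 0) (a : H) : contractSnd (l ∘ₗ mulLeft k a) (comul b) = 0 := by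
  rw [← contractSnd_one_tmul_mul, contractSnd_one_tmul_mul_comul l (ℛ k a)]
  refine Finset.sum_eq_zero fun i _ ↦ ?_
  rw [leftHit_apply_of_forall_conv_eq hl, hb, zero_smul, mul_zero]

theorem apply_mul_rightHit_eq_zero (hl : ∀ f, conv f l = f g • l) (hb : ∀ a, l (a * b) = 0)
    (f : Dual k H) (a : H) : l (a * rightHit f b) = 0 := by
  calc l (a * rightHit f b) = conv f (l ∘ₗ mulLeft k a) b := by
        rw [conv_eq_comp_rightHit]; rfl
    _ = f (leftHit (l ∘ₗ mulLeft k a) b) := by rw [conv_eq_comp_leftHit, comp_apply]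
    _ = 0 := by rw [leftHit_apply, contractSnd_comp_mulLeft_comul_eq_zero hl hb, map_zero]

variable [FiniteDimensional k H]

theorem counit_eq_zero_of_forall_apply_mul_eq_zero (hl₀ : l ≠ 0) (hl : ∀ f, conv f l = f g • l)
    (hb : ∀ a, l (a * b) = 0) : counit (R := k) b = 0 := by
  obtain ⟨a, ha⟩ : ∃ a, l a ≠ 0 := by
    by_contra! h
    exact hl₀ (LinearMap.ext h)
  have hcounit : (l ∘ₗ mulLeft k a) (mul' k H ((antipode k).rTensor H (comul b))) =
      counit (R := k) b * l a := by
    simp [mul_antipode_rTensor_comul_apply, ← Algebra.commutes, ← Algebra.smul_def]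
  have hzero (x : H) : contractSnd ((l ∘ₗ mulLeft k a) ∘ₗ mulLeft k x)
      ((antipode k).rTensor H (comul b)) = 0 := by
    rw [comp_assoc, ← mulLeft_mul, contractSnd_rTensor,
      contractSnd_comp_mulLeft_comul_eq_zero hl hb, map_zero]
  rw [apply_mul'_eq_sum (finBasis k H)] at hcounit
  simp only [hzero, map_zero, Finset.sum_const_zero] at hcounit
  exact (mul_eq_zero.mp hcounit.symm).resolve_right ha

theorem eq_zero_of_forall_apply_mul_eq_zero (hl₀ : l ≠ 0) (hl : ∀ f, conv f l = f g • l)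
    (hb : ∀ a, l (a * b) = 0) : b = 0 := by
  refine (forall_dual_apply_eq_zero_iff k b).mp fun f ↦ ?_
  rw [← counit_rightHit]
  exact counit_eq_zero_of_forall_apply_mul_eq_zero hl₀ hl (apply_mul_rightHit_eq_zero hl hb f)

theorem IsLeftIntegral.apply_ne_zero {L : H} (hL : IsLeftIntegral k L) (hL₀ : L ≠ 0) (hl₀ : l ≠ 0)
    (hl : ∀ f, conv f l = f g • l) : l L ≠ 0 := fun h ↦
  hL₀ <| eq_zero_of_forall_apply_mul_eq_zero hl₀ hl fun a ↦ by rw [hL, map_smul, h, smul_zero]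

end DualIntegral

section Integral

open Coalgebra HopfAlgebra Module

variable {R H : Type*} [CommSemiring R] [Semiring H] [HopfAlgebra R H] {L : H} {α : H →ₐ[R] R}

theorem IsLeftIntegral.antipode_smul_comul (hL : IsLeftIntegral R L) (a : H) :
    antipode R a • comul (R := R) L = (1 ⊗ₜ a) * comul L := by
  have ha : antipode R a =
      ∑ i ∈ (ℛ R a).index, counit (R := R) ((ℛ R a).right i) • antipode R ((ℛ R a).left i) := by
    conv_lhs => rw [← End.one_apply (R := R) a, ← leftHit_counit, leftHit_eq_sum _ (ℛ R a)]
    simp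
  rw [← sum_antipode_smul_comul (ℛ R a), Finset.sum_mul, ha, Finset.sum_smul]
  refine Finset.sum_congr rfl fun i _ ↦ ?_
  rw [smul_mul_assoc, ← Bialgebra.comul_mul, hL, map_smul, smul_comm, smul_assoc]

theorem comul_mul_tmul_one (hα : ∀ a, L * a = α a • L) (a : H) :
    comul L * (a ⊗ₜ[R] (1 : H)) =
      comul L * (1 ⊗ₜ antipode R (rightHit α.toLinearMap a)) := by
  rw [← sum_comul_mul_one_tmul_antipode (ℛ R a), Finset.mul_sum]
  simp only [← mul_assoc, ← Bialgebra.comul_mul, hα, map_smul, smul_mul_assoc]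
  simp [rightHit_eq_sum _ (ℛ R a), TensorProduct.tmul_sum, Finset.mul_sum]

theorem rTensor_antipode_tmul_mul (x y : H) (w : H ⊗[R] H) :
    (antipode R).rTensor H ((x ⊗ₜ y) * w) =
      (1 ⊗ₜ y) * (antipode R).rTensor H w * (antipode R x ⊗ₜ 1) := by
  induction w with
  | zero => simp
  | tmul => simp [antipode_mul_antidistrib]
  | add v w hv hw => simp only [mul_add, add_mul, map_add, hv, hw]

theorem sum_smul_rTensor_antipode_mul_comul {ι : Type*} {a : H} (r : Repr R a ι) (w : H ⊗[R] H) :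
    ∑ i ∈ r.index, r.left i • (antipode R).rTensor H (w * comul (r.right i)) =
      (antipode R).rTensor H (w * (1 ⊗ₜ a)) := by
  induction w with
  | zero => simp
  | tmul x y =>
    have hsmul (z : H) (v : H ⊗[R] H) : z • ((1 ⊗ₜ y) * v * (antipode R x ⊗ₜ 1)) =
        (1 ⊗ₜ y) * (z • v) * (antipode R x ⊗ₜ 1) := by
      simp [← tmul_one_mul_eq_smul, ← mul_assoc]
    simp only [rTensor_antipode_tmul_mul, hsmul]
    rw [← Finset.sum_mul, ← Finset.mul_sum, sum_smul_rTensor_antipode_comul]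
    simp
  | add v w hv hw => simp only [add_mul, map_add, smul_add, Finset.sum_add_distrib, hv, hw]

theorem rTensor_antipode_comul_mul_one_tmul (hα : ∀ a, L * a = α a • L) (a : H) :
    (antipode R).rTensor H (comul L * (1 ⊗ₜ a)) =
      leftHit α.toLinearMap a • (antipode R).rTensor H (comul (R := R) L) := by
  rw [← sum_smul_rTensor_antipode_mul_comul (ℛ R a), leftHit_eq_sum _ (ℛ R a), Finset.sum_smul]
  refine Finset.sum_congr rfl fun i _ ↦ ?_
  rw [← Bialgebra.comul_mul, hα, map_smul, map_smul, smul_comm, smul_assoc]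
  rfl

end Integral

section Radford

open Coalgebra HopfAlgebra LinearMap Module

variable {k H : Type*} [Field k] [Ring H] [HopfAlgebra k H] {l : Dual k H} {g L : H}
  {α : H →ₐ[k] k}

theorem rightHit_comp_mulLeft_antipode (hl : IsRightIntegralDual k l) (hL : IsLeftIntegral k L)
    (a : H) : rightHit (l ∘ₗ mulLeft k (antipode k a)) L = l L • a := by
  rw [rightHit_apply, ← contractFst_smul, hL.antipode_smul_comul, contractFst_one_tmul_mul,
    ← rightHit_apply, rightHit_apply_of_forall_conv_eq hl, mul_smul_comm, mul_one]

theorem rightHit_comp_mulRight (hl : IsRightIntegralDual k l) (hα : ∀ a, L * a = α a • L)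
    (a : H) : rightHit (l ∘ₗ mulRight k a) L =
      l L • antipode k (rightHit α.toLinearMap a) := by
  rw [rightHit_apply, ← contractFst_mul_tmul_one, comul_mul_tmul_one hα, contractFst_mul_one_tmul,
    ← rightHit_apply, rightHit_apply_of_forall_conv_eq hl, smul_mul_assoc, one_mul]

theorem leftHit_comp_mulLeft (hl : ∀ f, conv f l = f g • l) (hL : IsLeftIntegral k L) (a : H) :
    leftHit (l ∘ₗ mulLeft k a) L = l L • (antipode k a * g) := by
  rw [leftHit_apply, ← contractSnd_one_tmul_mul, ← hL.antipode_smul_comul, contractSnd_smul,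
    ← leftHit_apply, leftHit_apply_of_forall_conv_eq hl, mul_smul_comm]

theorem antipode_leftHit_comp_mulRight (hl : ∀ f, conv f l = f g • l)
    (hα : ∀ a, L * a = α a • L) (a : H) :
    antipode k (leftHit (l ∘ₗ mulRight k a) L) =
      l L • (leftHit α.toLinearMap a * antipode k g) := by
  rw [leftHit_apply, ← contractSnd_mul_one_tmul, ← contractSnd_rTensor,
    rTensor_antipode_comul_mul_one_tmul hα, contractSnd_smul, contractSnd_rTensor,
    ← leftHit_apply, leftHit_apply_of_forall_conv_eq hl, map_smul, mul_smul_comm]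

variable [FiniteDimensional k H]

theorem injective_rightHit_apply (hl : IsRightIntegralDual k l) (hL : IsLeftIntegral k L)
    (hlL : l L ≠ 0) : Function.Injective fun f : Dual k H ↦ rightHit f L := by
  let φ : Dual k H →ₗ[k] H :=
    { toFun f := rightHit f L
      map_add' f h := by simp [rightHit_eq_sum _ (ℛ k L), add_smul, Finset.sum_add_distrib]
      map_smul' c f := by simp [rightHit_eq_sum _ (ℛ k L), mul_smul, Finset.smul_sum] }
  refine (injective_iff_surjective_of_finrank_eq_finrank (f := φ) Subspace.dual_finrank_eq).mpr ?_
  intro a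
  refine ⟨l ∘ₗ mulLeft k (antipode k ((l L)⁻¹ • a)), ?_⟩
  exact (rightHit_comp_mulLeft_antipode hl hL _).trans (smul_inv_smul₀ hlL a)

-- The automorphism `a ↦ S²(a ↼ α)` is thus the Nakayama automorphism of the Frobenius form `l`.
theorem comp_mulLeft_antipode_antipode_rightHit (hl : IsRightIntegralDual k l)
    (hL : IsLeftIntegral k L) (hα : ∀ a, L * a = α a • L) (hlL : l L ≠ 0) (a : H) :
    l ∘ₗ mulLeft k (antipode k (antipode k (rightHit α.toLinearMap a))) = l ∘ₗ mulRight k a :=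
  injective_rightHit_apply hl hL hlL <|
    (rightHit_comp_mulLeft_antipode hl hL _).trans (rightHit_comp_mulRight hl hα a).symm

-- Radford's formula, obtained by contracting `ΔL` on the right against both sides of
-- `comp_mulLeft_antipode_antipode_rightHit`.
theorem antipode_pow_four_mul_rightHit {g : GroupLike k H}
    (hl : IsRightIntegralDual k l) (hlg : ∀ f, conv f l = f (g : H) • l)
    (hL : IsLeftIntegral k L) (hα : ∀ a, L * a = α a • L) (hlL : l L ≠ 0) :
    (antipode k : End k H) ^ 4 * rightHit α.toLinearMap =
      conjHom g * leftHit α.toLinearMap := by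
  ext a
  set b := antipode k (antipode k (rightHit α.toLinearMap a))
  have h : antipode k (g : H) * antipode k (antipode k b) =
      leftHit α.toLinearMap a * antipode k (g : H) := by
    rw [← antipode_mul_antidistrib]
    refine smul_right_injective H hlL ?_
    simp only
    rw [← map_smul, ← leftHit_comp_mulLeft hlg hL, ← antipode_leftHit_comp_mulRight hlg hα,
      comp_mulLeft_antipode_antipode_rightHit hl hL hα hlL]
  calc antipode k (antipode k b) = g * (antipode k (g : H) * antipode k (antipode k b)) := by
        rw [← mul_assoc, g.2.mul_antipode_cancel, one_mul]
    _ = conjHom g (leftHit α.toLinearMap a) := by rw [h, conjHom_apply, mul_assoc]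

end Radford

section OddOrder

open HopfAlgebra Module

variable {k H : Type*} [Field k] [Ring H] [HopfAlgebra k H] [FiniteDimensional k H]

theorem antipode_pow_four_eq {g : GroupLike k H} (hg : IsDistinguishedGroupLike k (g : H))
    {α : H →ₐ[k] k} (hα : IsDistinguishedGroupLikeDual k α) :
    (antipode k : End k H) ^ 4 =
      conjHom g * leftHit α.toLinearMap * rightHit (convInv α).toLinearMap := by
  obtain ⟨-, l, hl₀, hl, hlg⟩ := hg
  obtain ⟨L, hL₀, hL, hLα⟩ := hα
  rw [← antipode_pow_four_mul_rightHit hl hlg hL hLα (hL.apply_ne_zero hL₀ hl₀ hlg), mul_assoc,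
    rightHit_mul_rightHit_convInv, mul_one]

variable [CharZero k]

theorem odd_orderOf_antipode_pow_four (hdim : Odd (finrank k H)) {g : H}
    (hg : IsDistinguishedGroupLike k g) {α : H →ₐ[k] k} (hα : IsDistinguishedGroupLikeDual k α) :
    Odd (orderOf ((antipode k : End k H) ^ 4)) := by
  obtain ⟨g, rfl⟩ : ∃ g' : GroupLike k H, (g' : H) = g := ⟨⟨g, hg.1.isGroupLikeElem⟩, rfl⟩
  have hconj : Odd (orderOf (conjHom g)) :=
    (odd_orderOf_groupLike hdim g).of_dvd_nat (orderOf_map_dvd conjHom g)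
  have hcomm_left : Commute (conjHom g) (leftHit α.toLinearMap) :=
    commute_conjHom_of_map_mul g (leftHit_mul α) fun _ ↦ leftHit_of_isGroupLikeElem _
  have hcomm_right : Commute (conjHom g) (rightHit (convInv α).toLinearMap) :=
    commute_conjHom_of_map_mul (f := convInv α) g (rightHit_mul _) fun _ ↦
      rightHit_of_isGroupLikeElem _
  rw [antipode_pow_four_eq hg hα]
  refine odd_orderOf_mul_of_commute (hcomm_right.mul_left (commute_leftHit_rightHit _ _)) ?_
    (odd_orderOf_rightHit hdim _)
  exact odd_orderOf_mul_of_commute hcomm_left hconj (odd_orderOf_leftHit hdim α)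

theorem IsGroupLike.odd_orderOf (hdim : Odd (finrank k H)) {g : H} (hg : IsGroupLike k g) :
    Odd (orderOf g) := by
  obtain ⟨g, rfl⟩ : ∃ g' : GroupLike k H, (g' : H) = g := ⟨⟨g, hg.isGroupLikeElem⟩, rfl⟩
  have h := orderOf_injective (GroupLike.valMonoidHom (R := k) (A := H)) GroupLike.val_injective g
  exact h ▸ odd_orderOf_groupLike hdim g

end OddOrder

theorem stmt15_general {k : Type*} [Field k] [CharZero k]
    {H : Type*} [Ring H] [HopfAlgebra k H] [FiniteDimensional k H]
    (hdim : Odd (Module.finrank k H))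
    {g : H} (hg : IsDistinguishedGroupLike k g)
    {α : H →ₐ[k] k} (hα : IsDistinguishedGroupLikeDual k α) :
    Odd (orderOf g) ∧
      Odd (sInf {m : ℕ | 0 < m ∧
        convPow (α.toLinearMap : Module.Dual k H) m = (Coalgebra.counit : H →ₗ[k] k)}) ∧
      Odd (orderOf ((HopfAlgebra.antipode (R := k) (A := H) : Module.End k H) ^ 4)) ∧
      Odd (sInf {m : ℕ | 0 < m ∧
        (HopfAlgebra.antipode (R := k) (A := H) : Module.End k H) ^ (4 * m) = 1 ∧
        g ^ m = 1}) := by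
  have hodd_g : Odd (orderOf g) := hg.1.odd_orderOf hdim
  have hodd_antipode := odd_orderOf_antipode_pow_four hdim hg hα
  refine ⟨hodd_g, ?_, hodd_antipode, ?_⟩
  · rw [sInf_convPow_eq_counit]
    exact odd_orderOf_toConv hdim α
  · rw [sInf_pow_mul_eq_one_and_pow_eq_one]
    exact (hodd_antipode.mul hodd_g).of_dvd_nat (Nat.lcm_dvd_mul _ _)

/-- Remark 3.2(ii). Let `H` be a Hopf algebra of odd dimension over an
algebraically closed field of characteristic `0`, with distinguished group-like elements `g`
of `H` and `α` of `H*`. Then the order of `g`, the order of `α` (in the convolution group,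
whose unit is the counit), and the order of `S⁴` are all odd; consequently the index of `H`
(the least positive `m` with `S^{4m} = id` and `g^m = 1`) is odd. -/
theorem stmt15 (k : Type*) [Field k] [IsAlgClosed k] [CharZero k]
    (H : Type*) [Ring H] [HopfAlgebra k H] [FiniteDimensional k H]
    (hdim : Odd (Module.finrank k H))
    (g : H) (hg : IsDistinguishedGroupLike k g)
    (α : H →ₐ[k] k) (hα : IsDistinguishedGroupLikeDual k α) :
    Odd (orderOf g) ∧
      Odd (sInf {m : ℕ | 0 < m ∧
        convPow (α.toLinearMap : Module.Dual k H) m = (Coalgebra.counit : H →ₗ[k] k)}) ∧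
      Odd (orderOf ((HopfAlgebra.antipode (R := k) (A := H) : Module.End k H) ^ 4)) ∧
      Odd (sInf {m : ℕ | 0 < m ∧
        (HopfAlgebra.antipode (R := k) (A := H) : Module.End k H) ^ (4 * m) = 1 ∧
        g ^ m = 1}) :=
  stmt15_general hdim hg hα
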